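/- arXiv:1111.1200 — 2 statements merged into one kernel-verified Lean document; each statement's English description precedes it below -/
import Mathlib

section
/- Let G be a graph on m vertices with eigenvalues μ₁,…,μ_m (the roots of f_G, listed with multiplicity), and let H be an r-regular graph on n vertices. Then, as an identity of polynomials in ℂ[λ], (λ − r)^m · f_{G∘H}(λ) = f_H(λ)^m · ∏_{i=1}^{m} (λ² − (μ_i + r)λ + (rμ_i − n)). Consequently, for each eigenvalue μ of G, the two numbers (μ + r ± √((r − μ)² + 4n))/2 are eigenvalues of G∘H. -/
open Matrix Polynomial

/-- The characteristic matrix `λ I - B` of `B`, over the field `ℂ(λ)` of rational functions. -/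
noncomputable def charMatRatFunc {V : Type*} [Fintype V] [DecidableEq V]
    (B : Matrix V V ℂ) : Matrix V V (RatFunc ℂ) :=
  Matrix.scalar V (RatFunc.X : RatFunc ℂ) - B.map (algebraMap ℂ (RatFunc ℂ))

/-- The coronal of a matrix `B`: the sum of the entries of `(λ I - B)⁻¹` over `ℂ(λ)`. -/
noncomputable def coronal {V : Type*} [Fintype V] [DecidableEq V]
    (B : Matrix V V ℂ) : RatFunc ℂ :=
  ∑ i, ∑ j, (charMatRatFunc B)⁻¹ i j

/-- The adjacency matrix of the corona `G ∘ H`. -/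
def coronaMatrix {α β : Type*} (A : Matrix α α ℂ) (B : Matrix β β ℂ)
    [DecidableEq α] :
    Matrix (α ⊕ β × α) (α ⊕ β × α) ℂ :=
  Matrix.fromBlocks A
    (Matrix.of fun i p => if i = p.2 then 1 else 0)
    (Matrix.of fun p j => if p.2 = j then 1 else 0)
    (Matrix.of fun p q => if p.2 = q.2 then B p.1 q.1 else 0)

/-! Write `F` for the matrix `1 ⊗ I` joining the copies of `H` to `G`, so that
`λ - A∘B = [[λ - A, -Fᵀ], [-F, (λ - B) ⊗ I]]`. Regularity of `H` means that the all-ones vector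
is an eigenvector of `B`, whence `((λ - B) ⊗ I) F = (λ - r) F`. A column operation scaled by
`λ - r` therefore clears the lower left block without inverting `λ - B`, and replaces the upper
left block by `(λ - r)(λ - A) - Fᵀ F = (λ - r)(λ - A) - n`, a linear pencil in `A` whose determinant
is read off from the eigenvalues of `A`. The two numbers in the second claim are the roots of the
`i`-th quadratic factor, and neither equals `r`, where that factor takes the value `-n`. -/

open scoped Kronecker

section Determinants

variable {m n : Type*} [Fintype m] [DecidableEq m]

lemma det_fromBlocks_mul_pow_card_of_mul_eq_smul {R : Type*} [CommRing R]
    [Fintype n] [DecidableEq n] (P : Matrix m m R) (Q : Matrix m n R) {S : Matrix n m R}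
    {D : Matrix n n R} {c : R} (hDS : D * S = c • S) :
    (fromBlocks P Q S D).det * c ^ Fintype.card m = (c • P - Q * S).det * D.det := by
  have clear_block : fromBlocks P Q S D * fromBlocks (c • 1) 0 (-S) 1 =
      fromBlocks (c • P - Q * S) Q 0 D := by
    simp [fromBlocks_multiply, hDS, sub_eq_add_neg]
  simpa [det_smul] using congrArg det clear_block

lemma det_smul_one_sub_smul_eq_prod {K : Type*} [Field K] {A : Matrix m m K} {μ : m → K}
    (hμ : A.charpoly = ∏ i, (X - C (μ i))) (a b : K) :
    (a • (1 : Matrix m m K) - b • A).det = ∏ i, (a - b * μ i) := by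
  obtain rfl | hb := eq_or_ne b 0
  · simp
  have factor : a • (1 : Matrix m m K) - b • A = b • (scalar m (a / b) - A) := by
    rw [smul_sub, scalar_apply, ← smul_one_eq_diagonal, smul_smul, mul_div_cancel₀ a hb]
  calc (a • (1 : Matrix m m K) - b • A).det
      = b ^ Fintype.card m * A.charpoly.eval (a / b) := by
        rw [factor, det_smul, eval_charpoly]
    _ = ∏ i, b * (a / b - μ i) := by
        simp [hμ, eval_prod, Finset.prod_mul_distrib]
    _ = ∏ i, (a - b * μ i) := by
        simp only [mul_sub, mul_div_cancel₀ a hb]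

end Determinants

lemma sub_kronecker {l m n p R : Type*} [NonUnitalNonAssocRing R] (A₁ A₂ : Matrix l m R)
    (B : Matrix n p R) : (A₁ - A₂) ⊗ₖ B = A₁ ⊗ₖ B - A₂ ⊗ₖ B := by
  ext
  simp only [Matrix.sub_apply, kroneckerMap_apply, sub_mul]

section Corona

variable {α β : Type*} [DecidableEq α]

/-- The matrix `1_β ⊗ I_α` with one column per vertex of `G`, which joins `i : α` to every vertex
`(v, i)` of its copy of `H`. It is a row selection of the identity, so that its columns are indexed
by `α` and not by `Unit × α` as for a Kronecker product with a column matrix. -/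
def coronaIncidence (α β R : Type*) [DecidableEq α] [Zero R] [One R] : Matrix (β × α) α R :=
  (1 : Matrix α α R).submatrix Prod.snd id

lemma coronaIncidence_transpose_mul_self [Fintype α] [Fintype β] (R : Type*) [NonAssocSemiring R] :
    (coronaIncidence α β R)ᵀ * coronaIncidence α β R =
      (Fintype.card β : R) • (1 : Matrix α α R) := by
  ext i j
  obtain rfl | hij := eq_or_ne i j
  · simp [coronaIncidence, mul_apply, Fintype.sum_prod_type, one_apply]
  · simp [coronaIncidence, mul_apply, Fintype.sum_prod_type, one_apply, hij]

lemma kronecker_one_mul_coronaIncidence [Fintype α] [Fintype β] {R : Type*} [NonAssocSemiring R]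
    {M : Matrix β β R} {c : R} (hM : M *ᵥ 1 = c • 1) :
    (M ⊗ₖ (1 : Matrix α α R)) * coronaIncidence α β R = c • coronaIncidence α β R := by
  ext ⟨v, i⟩ j
  have row_sum : ∑ w, M v w = c := by simpa [mulVec, dotProduct] using congrFun hM v
  simp [coronaIncidence, mul_apply, Fintype.sum_prod_type, one_apply, row_sum]

lemma coronaMatrix_eq_fromBlocks (A : Matrix α α ℂ) (B : Matrix β β ℂ) :
    coronaMatrix A B =
      fromBlocks A (coronaIncidence α β ℂ)ᵀ (coronaIncidence α β ℂ) (B ⊗ₖ 1) := by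
  ext (i | ⟨v, i⟩) (j | ⟨w, j⟩) <;>
    simp [coronaMatrix, coronaIncidence, one_apply, eq_comm]

lemma scalar_sub_coronaMatrix [Fintype α] [Fintype β] [DecidableEq β]
    (A : Matrix α α ℂ) (B : Matrix β β ℂ) (t : ℂ) :
    scalar (α ⊕ β × α) t - coronaMatrix A B =
      fromBlocks (scalar α t - A) (-(coronaIncidence α β ℂ)ᵀ) (-coronaIncidence α β ℂ)
        ((scalar β t - B) ⊗ₖ 1) := by
  have scalar_blocks : scalar (α ⊕ β × α) t =
      fromBlocks (scalar α t) 0 0 (scalar β t ⊗ₖ (1 : Matrix α α ℂ)) := by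
    simp [← smul_one_eq_diagonal, smul_kronecker, ← fromBlocks_one, fromBlocks_smul]
  rw [scalar_blocks, coronaMatrix_eq_fromBlocks, sub_kronecker]
  simp only [sub_eq_add_neg, fromBlocks_neg, fromBlocks_add, zero_add]

variable [Fintype α] [Fintype β] [DecidableEq β] {B : Matrix β β ℂ} {r : ℂ}

lemma eval_charpoly_coronaMatrix_mul_pow (A : Matrix α α ℂ) (hB : B *ᵥ 1 = r • 1) (t : ℂ) :
    (coronaMatrix A B).charpoly.eval t * (t - r) ^ Fintype.card α =
      (((t - r) * t - Fintype.card β) • (1 : Matrix α α ℂ) - (t - r) • A).det *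
        B.charpoly.eval t ^ Fintype.card α := by
  have eigenvector : (scalar β t - B) *ᵥ 1 = (t - r) • 1 := by
    rw [sub_mulVec, hB, scalar_apply, ← smul_one_eq_diagonal, smul_mulVec, one_mulVec, sub_smul]
  have lower_left : ((scalar β t - B) ⊗ₖ (1 : Matrix α α ℂ)) * -coronaIncidence α β ℂ =
      (t - r) • -coronaIncidence α β ℂ := by
    rw [Matrix.mul_neg, kronecker_one_mul_coronaIncidence eigenvector, smul_neg]
  have upper_left :
      (t - r) • (scalar α t - A) - -(coronaIncidence α β ℂ)ᵀ * -coronaIncidence α β ℂ =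
        ((t - r) * t - Fintype.card β) • (1 : Matrix α α ℂ) - (t - r) • A := by
    rw [Matrix.neg_mul, Matrix.mul_neg, neg_neg, coronaIncidence_transpose_mul_self,
      scalar_apply, ← smul_one_eq_diagonal]
    module
  rw [eval_charpoly, scalar_sub_coronaMatrix,
    det_fromBlocks_mul_pow_card_of_mul_eq_smul _ _ lower_left, upper_left, det_kronecker,
    det_one, one_pow, mul_one, eval_charpoly]

lemma pow_mul_charpoly_coronaMatrix {A : Matrix α α ℂ} (hB : B *ᵥ 1 = r • 1) {μ : α → ℂ}
    (hμ : A.charpoly = ∏ i, (X - C (μ i))) :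
    (X - C r) ^ Fintype.card α * (coronaMatrix A B).charpoly =
      B.charpoly ^ Fintype.card α *
        ∏ i, (X ^ 2 - C (μ i + r) * X + C (r * μ i - Fintype.card β)) := by
  refine Polynomial.funext fun t ↦ ?_
  have quadratic (i : α) : (t - r) * t - Fintype.card β - (t - r) * μ i =
      t ^ 2 - (μ i + r) * t + (r * μ i - Fintype.card β) := by ring
  have identity_at_t := eval_charpoly_coronaMatrix_mul_pow A hB t
  simp only [det_smul_one_sub_smul_eq_prod hμ, quadratic] at identity_at_t
  simpa only [eval_mul, eval_pow, eval_sub, eval_add, eval_X, eval_C, eval_prod, mul_comm]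
    using identity_at_t

theorem corona_regular_spectrum_general [Nonempty β] {A : Matrix α α ℂ} (hB : B *ᵥ 1 = r • 1)
    {μ : α → ℂ} (hμ : A.charpoly = ∏ i, (X - C (μ i))) :
    (X - C r) ^ Fintype.card α * (coronaMatrix A B).charpoly =
      B.charpoly ^ Fintype.card α *
        ∏ i, (X ^ 2 - C (μ i + r) * X + C (r * μ i - Fintype.card β)) ∧
    ∀ i : α, ∀ z : ℂ, z ^ 2 = (r - μ i) ^ 2 + 4 * Fintype.card β →
      (coronaMatrix A B).charpoly.eval ((μ i + r + z) / 2) = 0 := by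
  have identity := pow_mul_charpoly_coronaMatrix hB hμ
  refine ⟨identity, fun i z hz ↦ ?_⟩
  set t := (μ i + r + z) / 2
  have quadratic_eq_zero : t ^ 2 - (μ i + r) * t + (r * μ i - Fintype.card β) = 0 := by
    linear_combination hz / 4
  have t_sub_r_ne_zero : t - r ≠ 0 := by
    intro t_sub_r_eq_zero
    have card_eq_zero : (Fintype.card β : ℂ) = 0 := by
      linear_combination (t - μ i) * t_sub_r_eq_zero - quadratic_eq_zero
    exact Fintype.card_ne_zero (Nat.cast_eq_zero.mp card_eq_zero)
  have rhs_eq_zero :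
      ∏ j, (t ^ 2 - (μ j + r) * t + (r * μ j - Fintype.card β)) = 0 :=
    Finset.prod_eq_zero (Finset.mem_univ i) quadratic_eq_zero
  have identity_at_t : (t - r) ^ Fintype.card α * (coronaMatrix A B).charpoly.eval t = 0 := by
    simpa [eval_prod, rhs_eq_zero] using congrArg (eval t) identity
  exact (mul_eq_zero.mp identity_at_t).resolve_left (pow_ne_zero _ t_sub_r_ne_zero)

end Corona

lemma adjMatrix_mulVec_one_of_isRegularOfDegree {V R : Type*} [Fintype V] [NonAssocSemiring R]
    {H : SimpleGraph V} [DecidableRel H.Adj] {r : ℕ} (hH : H.IsRegularOfDegree r) :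
    H.adjMatrix R *ᵥ 1 = (r : R) • 1 := by
  ext v
  simpa using H.adjMatrix_mulVec_const_apply_of_regular (a := (1 : R)) hH (v := v)

/-- For `G` with eigenvalues `μ₁, …, μ_m` and `H` an `r`-regular graph on `n ≥ 1` vertices:
`(λ - r)^m ⬝ f_{G∘H}(λ) = f_H(λ)^m ⬝ ∏ᵢ (λ² - (μᵢ + r)λ + (rμᵢ - n))`, and consequently for
each eigenvalue `μ` of `G` the two numbers `(μ + r ± √((r - μ)² + 4n))/2` are eigenvalues of
`G ∘ H`. -/
theorem corona_regular_spectrum {m n : ℕ} (hn : 0 < n)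
    (G : SimpleGraph (Fin m)) (H : SimpleGraph (Fin n))
    [DecidableRel G.Adj] [DecidableRel H.Adj] (r : ℕ)
    (hreg : ∀ v : Fin n, H.degree v = r) (μ : Fin m → ℂ)
    (hμ : (G.adjMatrix ℂ).charpoly = ∏ i, (Polynomial.X - Polynomial.C (μ i))) :
    (Polynomial.X - Polynomial.C (r : ℂ)) ^ m *
        (coronaMatrix (G.adjMatrix ℂ) (H.adjMatrix ℂ)).charpoly =
      (H.adjMatrix ℂ).charpoly ^ m *
        ∏ i, (Polynomial.X ^ 2 - Polynomial.C (μ i + r) * Polynomial.X +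
          Polynomial.C ((r : ℂ) * μ i - n)) ∧
    ∀ i : Fin m, ∀ z : ℂ, z ^ 2 = ((r : ℂ) - μ i) ^ 2 + 4 * n →
      (coronaMatrix (G.adjMatrix ℂ) (H.adjMatrix ℂ)).charpoly.eval ((μ i + r + z) / 2) = 0 := by
  have : Nonempty (Fin n) := ⟨⟨0, hn⟩⟩
  simpa only [Fintype.card_fin] using
    corona_regular_spectrum_general (adjMatrix_mulVec_one_of_isRegularOfDegree hreg) hμ
end

section
/- If H₁ is an r₁-regular graph, H₂ is an r₂-regular graph, and H₁ and H₂ are cospectral (their adjacency matrices have equal characteristic polynomials), then χ_{H₁}(λ) = χ_{H₂}(λ), i.e., cospectral regular graphs have the same coronal. -/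
open Matrix Polynomial

/-!
If `B` has constant row sum `r`, the all-ones vector is an eigenvector of `λ I - B` with eigenvalue
`λ - r`, so the coronal is `n / (λ - r)`. The spectrum determines the order `n` as the degree of the
characteristic polynomial. If `B` is moreover entrywise nonnegative and nonempty, it determines `r`
as well: `r` is an eigenvalue, and by Gershgorin's theorem no eigenvalue exceeds it in modulus.
-/

open scoped ComplexOrder

section Coronal

variable {V : Type*} [Fintype V] [DecidableEq V]

lemma charMatRatFunc_eq_map_charmatrix (B : Matrix V V ℂ) :
    charMatRatFunc B = (algebraMap ℂ[X] (RatFunc ℂ)).mapMatrix B.charmatrix := by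
  ext i j
  obtain rfl | hij := eq_or_ne i j
  · simp [charMatRatFunc, charmatrix]
  · simp [charMatRatFunc, charmatrix, hij]

lemma isUnit_det_charMatRatFunc (B : Matrix V V ℂ) : IsUnit (charMatRatFunc B).det := by
  rw [charMatRatFunc_eq_map_charmatrix, ← RingHom.map_det, isUnit_iff_ne_zero]
  exact RatFunc.algebraMap_ne_zero B.charpoly_monic.ne_zero

lemma ratFunc_X_sub_C_ne_zero {K : Type*} [Field K] (r : K) :
    (RatFunc.X - RatFunc.C r : RatFunc K) ≠ 0 := by
  simpa using RatFunc.algebraMap_ne_zero (X_sub_C_ne_zero r)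

lemma charMatRatFunc_mulVec_of_mulVec_eq_smul {B : Matrix V V ℂ} {r : ℂ} {v : V → ℂ}
    (hv : B *ᵥ v = r • v) :
    charMatRatFunc B *ᵥ (RatFunc.C ∘ v) = (RatFunc.X - RatFunc.C r) • (RatFunc.C ∘ v) := by
  ext i
  have hBv : (B.map RatFunc.C *ᵥ (RatFunc.C ∘ v)) i = RatFunc.C r * RatFunc.C (v i) := by
    rw [← RingHom.map_mulVec, hv, Pi.smul_apply, smul_eq_mul, map_mul]
  simp [charMatRatFunc, sub_mulVec, hBv, sub_mul]

lemma coronal_eq_one_dotProduct_inv_mulVec_one (B : Matrix V V ℂ) :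
    coronal B = 1 ⬝ᵥ (charMatRatFunc B)⁻¹ *ᵥ 1 := by
  simp [coronal, mulVec, dotProduct]

lemma coronal_eq_card_div_of_mulVec_one {B : Matrix V V ℂ} {r : ℂ} (hB : B *ᵥ 1 = r • 1) :
    coronal B = (Fintype.card V : RatFunc ℂ) / (RatFunc.X - RatFunc.C r) := by
  set d := RatFunc.X - RatFunc.C r
  have hd : d ≠ 0 := ratFunc_X_sub_C_ne_zero r
  have one_eq : RatFunc.C ∘ (1 : V → ℂ) = 1 := by ext; simp
  have charMat_one : charMatRatFunc B *ᵥ 1 = d • 1 := by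
    simpa only [one_eq] using charMatRatFunc_mulVec_of_mulVec_eq_smul hB
  have inv_one : (charMatRatFunc B)⁻¹ *ᵥ 1 = d⁻¹ • 1 := by
    rw [eq_inv_smul_iff₀ hd, ← mulVec_smul, ← charMat_one, mulVec_mulVec,
      nonsing_inv_mul _ (isUnit_det_charMatRatFunc B), one_mulVec]
  rw [coronal_eq_one_dotProduct_inv_mulVec_one, inv_one, dotProduct_smul, one_dotProduct_one,
    smul_eq_mul, div_eq_inv_mul]

end Coronal

section Graph

variable {V : Type*} {G : SimpleGraph V} [DecidableRel G.Adj]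

lemma adjMatrix_apply_nonneg {R : Type*} [Zero R] [One R] [Preorder R] [ZeroLEOneClass R]
    (v w : V) : 0 ≤ G.adjMatrix R v w := by
  rw [SimpleGraph.adjMatrix_apply]
  split_ifs
  exacts [zero_le_one, le_rfl]

lemma adjMatrix_mulVec_one_of_regular [Fintype V] {R : Type*} [NonAssocSemiring R] {r : ℕ}
    (hG : G.IsRegularOfDegree r) : G.adjMatrix R *ᵥ 1 = (r : R) • 1 :=
  funext fun _ => SimpleGraph.adjMatrix_mulVec_const_apply_of_regular hG

end Graph

section Spectrum

variable {V W : Type*} [Fintype V] [DecidableEq V] [Fintype W] [DecidableEq W]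

lemma isRoot_charpoly_iff_hasEigenvalue_toLin' {R : Type*} [CommRing R] [IsDomain R]
    {A : Matrix V V R} {μ : R} :
    A.charpoly.IsRoot μ ↔ Module.End.HasEigenvalue (toLin' A) μ := by
  rw [Module.End.hasEigenvalue_iff_isRoot_charpoly, charpoly_toLin']

lemma isRoot_charpoly_of_mulVec_eq_smul {R : Type*} [CommRing R] [IsDomain R]
    {A : Matrix V V R} {μ : R} {v : V → R} (hv : A *ᵥ v = μ • v) (hv₀ : v ≠ 0) :
    A.charpoly.IsRoot μ :=
  isRoot_charpoly_iff_hasEigenvalue_toLin'.2 <|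
    Module.End.hasEigenvalue_of_hasEigenvector
      ⟨Module.End.mem_eigenspace_iff.2 (by rwa [toLin'_apply]), hv₀⟩

lemma exists_norm_le_sum_norm_of_isRoot_charpoly {K : Type*} [NormedField K] {A : Matrix V V K}
    {μ : K} (hμ : A.charpoly.IsRoot μ) : ∃ i, ‖μ‖ ≤ ∑ j, ‖A i j‖ := by
  obtain ⟨i, hi⟩ := eigenvalue_mem_ball (isRoot_charpoly_iff_hasEigenvalue_toLin'.1 hμ)
  refine ⟨i, ?_⟩
  calc ‖μ‖ ≤ ‖A i i‖ + ‖μ - A i i‖ := norm_le_norm_add_norm_sub' μ (A i i)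
    _ ≤ ‖A i i‖ + ∑ j ∈ Finset.univ.erase i, ‖A i j‖ := by
      gcongr
      exact mem_closedBall_iff_norm.1 hi
    _ = ∑ j, ‖A i j‖ := Finset.add_sum_erase _ (fun j => ‖A i j‖) (Finset.mem_univ i)

variable {𝕜 : Type*} [RCLike 𝕜]

lemma norm_le_of_isRoot_charpoly_of_nonneg {A : Matrix V V 𝕜} {r μ : 𝕜}
    (hA₀ : ∀ i j, 0 ≤ A i j) (hA : A *ᵥ 1 = r • 1) (hμ : A.charpoly.IsRoot μ) :
    (‖μ‖ : 𝕜) ≤ r := by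
  obtain ⟨i, hi⟩ := exists_norm_le_sum_norm_of_isRoot_charpoly hμ
  calc (‖μ‖ : 𝕜) ≤ (∑ j, ‖A i j‖ : ℝ) := RCLike.ofReal_le_ofReal.2 hi
    _ = ∑ j, A i j := by
      rw [RCLike.ofReal_sum]
      exact Finset.sum_congr rfl fun j _ => RCLike.norm_of_nonneg' (hA₀ i j)
    _ = r := by simpa [mulVec, dotProduct] using congrFun hA i

lemma card_eq_of_charpoly_eq {R : Type*} [CommRing R] [Nontrivial R] {A : Matrix V V R}
    {B : Matrix W W R} (hAB : A.charpoly = B.charpoly) : Fintype.card V = Fintype.card W := by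
  rw [← charpoly_natDegree_eq_dim A, hAB, charpoly_natDegree_eq_dim B]

lemma rowSum_eq_of_charpoly_eq_of_nonneg [Nonempty V] {A : Matrix V V 𝕜} {B : Matrix W W 𝕜}
    {r s : 𝕜} (hA₀ : ∀ i j, 0 ≤ A i j) (hB₀ : ∀ i j, 0 ≤ B i j)
    (hA : A *ᵥ 1 = r • 1) (hB : B *ᵥ 1 = s • 1) (hAB : A.charpoly = B.charpoly) : r = s := by
  have : Nonempty W := Fintype.card_pos_iff.1 (card_eq_of_charpoly_eq hAB ▸ Fintype.card_pos)
  have root_r : B.charpoly.IsRoot r := hAB ▸ isRoot_charpoly_of_mulVec_eq_smul hA one_ne_zero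
  have root_s : A.charpoly.IsRoot s := hAB ▸ isRoot_charpoly_of_mulVec_eq_smul hB one_ne_zero
  have norm_r_le : (‖r‖ : 𝕜) ≤ s := norm_le_of_isRoot_charpoly_of_nonneg hB₀ hB root_r
  have norm_s_le : (‖s‖ : 𝕜) ≤ r := norm_le_of_isRoot_charpoly_of_nonneg hA₀ hA root_s
  have r_nonneg : 0 ≤ r := (RCLike.ofReal_nonneg.2 (norm_nonneg s)).trans norm_s_le
  have s_nonneg : 0 ≤ s := (RCLike.ofReal_nonneg.2 (norm_nonneg r)).trans norm_r_le
  rw [RCLike.norm_of_nonneg' r_nonneg] at norm_r_le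
  rw [RCLike.norm_of_nonneg' s_nonneg] at norm_s_le
  exact le_antisymm norm_r_le norm_s_le

theorem coronal_eq_of_cospectral_regular_general {A : Matrix V V ℂ} {B : Matrix W W ℂ} {r s : ℂ}
    (hA₀ : ∀ i j, 0 ≤ A i j) (hB₀ : ∀ i j, 0 ≤ B i j)
    (hA : A *ᵥ 1 = r • 1) (hB : B *ᵥ 1 = s • 1) (hAB : A.charpoly = B.charpoly) :
    coronal A = coronal B := by
  have card_eq : Fintype.card V = Fintype.card W := card_eq_of_charpoly_eq hAB
  rw [coronal_eq_card_div_of_mulVec_one hA, coronal_eq_card_div_of_mulVec_one hB, ← card_eq]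
  cases isEmpty_or_nonempty V
  · simp
  · rw [rowSum_eq_of_charpoly_eq_of_nonneg hA₀ hB₀ hA hB hAB]

end Spectrum

/-- Cospectral regular graphs have the same coronal. -/
theorem coronal_eq_of_cospectral_regular {n₁ n₂ : ℕ}
    (H₁ : SimpleGraph (Fin n₁)) (H₂ : SimpleGraph (Fin n₂))
    [DecidableRel H₁.Adj] [DecidableRel H₂.Adj] (r₁ r₂ : ℕ)
    (hreg₁ : ∀ v : Fin n₁, H₁.degree v = r₁) (hreg₂ : ∀ v : Fin n₂, H₂.degree v = r₂)
    (hcospec : (H₁.adjMatrix ℂ).charpoly = (H₂.adjMatrix ℂ).charpoly) :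
    coronal (H₁.adjMatrix ℂ) = coronal (H₂.adjMatrix ℂ) :=
  coronal_eq_of_cospectral_regular_general
    adjMatrix_apply_nonneg adjMatrix_apply_nonneg
    (adjMatrix_mulVec_one_of_regular hreg₁) (adjMatrix_mulVec_one_of_regular hreg₂) hcospec
end
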